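/- Define μ on the even nonnegative integers by μ({2k}) = C_k·(4/27)^k / C(4/27), where C_0 = 1, C_k = 2·(3k−3)!/(k!·(2k−1)!) and C(4/27) = Σ_{k≥0} C_k (4/27)^k. Then μ is a probability measure on ℕ (supported on even numbers) and its mean Σ_{k≥0} 2k·μ({2k}) equals 2/3. -/

import Mathlib

/-- The number of rooted 2-connected planar maps with `k` edges (Tutte's formula),
as a real number: `C 0 = 1` and `C k = 2 (3k-3)! / (k! (2k-1)!)` for `k ≥ 1`. -/
noncomputable def C (k : ℕ) : ℝ :=
  if k = 0 then 1
  else 2 * (Nat.factorial (3 * k - 3) : ℝ) /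
    ((Nat.factorial k : ℝ) * (Nat.factorial (2 * k - 1) : ℝ))

/-- The probability mass function `μ` on `ℕ`, supported on even numbers:
`μ({2k}) = C_k (4/27)^k / C(4/27)` where `C(4/27) = 4/3`. -/
noncomputable def mu (m : ℕ) : ℝ :=
  if Even m then C (m / 2) * (4 / 27) ^ (m / 2) / (4 / 3) else 0

/-!
The factorials in `C` split into rising factorials, which turns both sums into hypergeometric series
at `1`: for `k ≥ 1` the number `C k (4/27)^k` is `2/3` times the `k`-th coefficient of
`₂F₁(-1/3, -2/3; 1/2)`, and `k C k (4/27)^k` is `8/27` times the `(k-1)`-st coefficient of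
`₂F₁(2/3, 1/3; 3/2)`. Gauss's theorem sums both to `Γ(1/2) Γ(3/2) / (Γ(5/6) Γ(7/6)) = 3/2`.

For Gauss's theorem, a telescoping identity relates the sum at `c` to the sum at `c + 1`. Under
iteration the sum at `c + N` tends to `1` by dominated convergence, and the accumulated factor tends
to the quotient of Gamma values by Euler's limit formula.
-/

open Filter Topology Asymptotics
open scoped Nat

section Pochhammer

lemma ascPochhammer_eval_succ_left {R : Type*} [CommSemiring R] (n : ℕ) (s : R) :
    (ascPochhammer R (n + 1)).eval s = s * (ascPochhammer R n).eval (s + 1) := by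
  simp [ascPochhammer_succ_left, Polynomial.eval_comp]

lemma ascPochhammer_eval_eq_prod_range {R : Type*} [CommSemiring R] (n : ℕ) (s : R) :
    (ascPochhammer R n).eval s = ∏ j ∈ Finset.range n, (s + j) := by
  induction n with
  | zero => simp
  | succ n ih => rw [ascPochhammer_succ_eval, Finset.prod_range_succ, ih]

lemma norm_ascPochhammer_eval_le {R : Type*} [NormedRing R] [NormOneClass R] (s : R) (n : ℕ) :
    ‖(ascPochhammer R n).eval s‖ ≤ (ascPochhammer ℝ n).eval ‖s‖ := by
  induction n with
  | zero => simp
  | succ n ih =>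
    have hn : ‖s + n‖ ≤ ‖s‖ + n := by
      simpa using norm_add_le_of_le le_rfl (Nat.norm_cast_le (α := R) n)
    rw [ascPochhammer_succ_eval, ascPochhammer_succ_eval]
    exact (norm_mul_le _ _).trans (mul_le_mul ih hn (norm_nonneg _) ((norm_nonneg _).trans ih))

lemma ascPochhammer_eval_le_norm {r : ℝ} (hr : 0 ≤ r) {s : ℂ} (hrs : r ≤ s.re) (n : ℕ) :
    (ascPochhammer ℝ n).eval r ≤ ‖(ascPochhammer ℂ n).eval s‖ := by
  induction n with
  | zero => simp
  | succ n ih =>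
    rw [ascPochhammer_succ_eval, ascPochhammer_succ_eval, norm_mul]
    have hn : r + n ≤ ‖s + n‖ := by
      calc r + n ≤ (s + n).re := by simpa using hrs
        _ ≤ ‖s + n‖ := Complex.re_le_norm _
    gcongr

lemma tendsto_inv_ascPochhammer_eval_comap_re {n : ℕ} (hn : n ≠ 0) :
    Tendsto (fun s : ℂ => ((ascPochhammer ℂ n).eval s)⁻¹) (comap Complex.re atTop) (𝓝 0) := by
  have hdeg : 0 < (ascPochhammer ℝ n).degree := by
    rw [← Polynomial.natDegree_pos_iff_degree_pos, ascPochhammer_natDegree]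
    exact Nat.pos_of_ne_zero hn
  have hlead : 0 ≤ (ascPochhammer ℝ n).leadingCoeff := by
    rw [(monic_ascPochhammer ℝ n).leadingCoeff]
    exact zero_le_one
  have hre := (Polynomial.tendsto_atTop_of_leadingCoeff_nonneg _ hdeg hlead).comp
    (tendsto_comap (f := Complex.re))
  refine tendsto_inv₀_cobounded.comp
    (tendsto_norm_atTop_iff_cobounded.1 (tendsto_atTop_mono' _ ?_ hre))
  filter_upwards [preimage_mem_comap (Ioi_mem_atTop 0)] with s hs
  exact ascPochhammer_eval_le_norm (le_of_lt hs) le_rfl n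

lemma ascPochhammer_eval_ne_zero {R : Type*} [Ring R] [IsDomain R] {s : R}
    (hs : ∀ m : ℕ, s ≠ -m) (n : ℕ) : (ascPochhammer R n).eval s ≠ 0 := by
  rw [Ne, ascPochhammer_eval_eq_zero_iff]
  rintro ⟨m, -, hm⟩
  exact hs m (by rw [hm, neg_neg])

lemma factorial_three_mul {K : Type*} [Field K] [CharZero K] (k : ℕ) :
    ((3 * k)! : K) =
      27 ^ k * k ! * (ascPochhammer K k).eval (1 / 3) * (ascPochhammer K k).eval (2 / 3) := by
  induction k with
  | zero => simp
  | succ k ih =>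
    rw [show 3 * (k + 1) = 3 * k + 1 + 1 + 1 by ring]
    simp only [Nat.factorial_succ, ascPochhammer_succ_eval]
    push_cast [ih]
    ring

lemma factorial_two_mul_add_one {K : Type*} [Field K] [CharZero K] (k : ℕ) :
    ((2 * k + 1)! : K) = 4 ^ k * k ! * (ascPochhammer K k).eval (3 / 2) := by
  induction k with
  | zero => simp
  | succ k ih =>
    rw [show 2 * (k + 1) + 1 = 2 * k + 1 + 1 + 1 by ring]
    simp only [Nat.factorial_succ, ascPochhammer_succ_eval]
    push_cast [Nat.factorial_succ] at ih ⊢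
    rw [ih]
    ring

end Pochhammer

section GammaSeq

lemma ascPochhammer_eval_succ_eq_div_GammaSeq {n : ℕ} (hn : n ≠ 0) (s : ℂ) :
    (ascPochhammer ℂ (n + 1)).eval s = (n : ℂ) ^ s * n ! / Complex.GammaSeq s n := by
  have hpow : (n : ℂ) ^ s * n ! ≠ 0 :=
    mul_ne_zero (by simp [Complex.cpow_eq_zero_iff, hn]) (by simp [n.factorial_ne_zero])
  rw [ascPochhammer_eval_eq_prod_range, Complex.GammaSeq, div_div_cancel₀ hpow]

lemma ascPochhammer_eval_succ_mul_div {n : ℕ} (hn : n ≠ 0) (a b c d : ℂ) :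
    (ascPochhammer ℂ (n + 1)).eval a * (ascPochhammer ℂ (n + 1)).eval b /
        ((ascPochhammer ℂ (n + 1)).eval c * (ascPochhammer ℂ (n + 1)).eval d) =
      (n : ℂ) ^ (a + b - c - d) * (Complex.GammaSeq c n * Complex.GammaSeq d n /
        (Complex.GammaSeq a n * Complex.GammaSeq b n)) := by
  have hn' : (n : ℂ) ≠ 0 := Nat.cast_ne_zero.2 hn
  have hf : (n ! : ℂ) ≠ 0 := Nat.cast_ne_zero.2 n.factorial_ne_zero
  simp only [ascPochhammer_eval_succ_eq_div_GammaSeq hn, Complex.cpow_sub _ _ hn',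
    Complex.cpow_add _ _ hn']
  field_simp

lemma tendsto_inv_GammaSeq (s : ℂ) :
    Tendsto (fun n => (Complex.GammaSeq s n)⁻¹) atTop (𝓝 (Complex.Gamma s)⁻¹) := by
  by_cases hs : Complex.Gamma s = 0
  · obtain ⟨m, rfl⟩ := (Complex.Gamma_eq_zero_iff s).1 hs
    -- The values `Γ (-m) = 0` and `x / 0 = 0` make both inverses agree with the zeros of `1 / Γ`.
    rw [hs, inv_zero]
    refine tendsto_const_nhds.congr' ?_
    filter_upwards [eventually_ge_atTop m] with n hn
    rw [Complex.GammaSeq, Finset.prod_eq_zero (Finset.mem_range.2 (Nat.lt_succ_of_le hn))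
      (neg_add_cancel _), div_zero, inv_zero]
  · exact (Complex.GammaSeq_tendsto_Gamma s).inv₀ hs

lemma tendsto_GammaSeq_mul_div (a b c d : ℂ) :
    Tendsto (fun n => Complex.GammaSeq c n * Complex.GammaSeq d n /
      (Complex.GammaSeq a n * Complex.GammaSeq b n)) atTop
      (𝓝 (Complex.Gamma c * Complex.Gamma d / (Complex.Gamma a * Complex.Gamma b))) := by
  simp only [div_eq_mul_inv, mul_inv]
  exact ((Complex.GammaSeq_tendsto_Gamma c).mul (Complex.GammaSeq_tendsto_Gamma d)).mul
    ((tendsto_inv_GammaSeq a).mul (tendsto_inv_GammaSeq b))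

lemma tendsto_ascPochhammer_eval_mul_div {a b c d : ℂ} (h : a + b = c + d) :
    Tendsto (fun n => (ascPochhammer ℂ n).eval a * (ascPochhammer ℂ n).eval b /
      ((ascPochhammer ℂ n).eval c * (ascPochhammer ℂ n).eval d)) atTop
      (𝓝 (Complex.Gamma c * Complex.Gamma d / (Complex.Gamma a * Complex.Gamma b))) := by
  rw [← tendsto_add_atTop_iff_nat 1]
  refine (tendsto_GammaSeq_mul_div a b c d).congr' ?_
  filter_upwards [eventually_ne_atTop 0] with n hn
  rw [ascPochhammer_eval_succ_mul_div hn, h, add_sub_cancel_left, sub_self, Complex.cpow_zero,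
    one_mul]

end GammaSeq

section Coefficient

variable {K : Type*} [Field K]

lemma succ_mul_ordinaryHypergeometricCoefficient_succ_right [CharZero K] (a b c : K) (n : ℕ) :
    ((n : K) + 1) * ordinaryHypergeometricCoefficient a b c (n + 1) =
      ordinaryHypergeometricCoefficient a b c n * ((a + n) * (b + n) / (c + n)) := by
  have hn : (n : K) + 1 ≠ 0 := n.cast_add_one_ne_zero
  simp only [ordinaryHypergeometricCoefficient, ascPochhammer_succ_eval, Nat.factorial_succ,
    Nat.cast_mul, Nat.cast_succ]
  field_simp

lemma succ_mul_ordinaryHypergeometricCoefficient_succ_left [CharZero K] (a b c : K) (n : ℕ) :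
    ((n : K) + 1) * ordinaryHypergeometricCoefficient a b c (n + 1) =
      a * b / c * ordinaryHypergeometricCoefficient (a + 1) (b + 1) (c + 1) n := by
  have hn : (n : K) + 1 ≠ 0 := n.cast_add_one_ne_zero
  simp only [ordinaryHypergeometricCoefficient, ascPochhammer_eval_succ_left, Nat.factorial_succ,
    Nat.cast_mul, Nat.cast_succ]
  field_simp

lemma ordinaryHypergeometricCoefficient_add_one_right {a b c : K} (hc : ∀ m : ℕ, c ≠ -m)
    (n : ℕ) : ordinaryHypergeometricCoefficient a b (c + 1) n =
      ordinaryHypergeometricCoefficient a b c n * (c / (c + n)) := by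
  have hc0 : c ≠ 0 := by simpa using hc 0
  have hshift : (ascPochhammer K n).eval (c + 1) = (ascPochhammer K n).eval c * (c + n) / c := by
    rw [eq_div_iff hc0, mul_comm, ← ascPochhammer_eval_succ_left, ascPochhammer_succ_eval]
  rw [ordinaryHypergeometricCoefficient, ordinaryHypergeometricCoefficient, hshift, inv_div]
  field_simp

lemma ordinaryHypergeometricCoefficient_contiguous [CharZero K] {a b c : K}
    (hc : ∀ m : ℕ, c ≠ -m) (n : ℕ) :
    c * (c - a - b) * ordinaryHypergeometricCoefficient a b c n -
        (c - a) * (c - b) * ordinaryHypergeometricCoefficient a b (c + 1) n =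
      c * (n * ordinaryHypergeometricCoefficient a b c n -
        (n + 1 : ℕ) * ordinaryHypergeometricCoefficient a b c (n + 1)) := by
  have hcn : c + n ≠ 0 := fun h => hc n (eq_neg_of_add_eq_zero_left h)
  rw [Nat.cast_succ, succ_mul_ordinaryHypergeometricCoefficient_succ_right,
    ordinaryHypergeometricCoefficient_add_one_right hc]
  field_simp
  ring

lemma ofReal_ordinaryHypergeometricCoefficient (a b c : ℝ) (n : ℕ) :
    ((ordinaryHypergeometricCoefficient a b c n : ℝ) : ℂ) =
      ordinaryHypergeometricCoefficient (a : ℂ) b c n := by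
  have hasc : ∀ s : ℝ, (((ascPochhammer ℝ n).eval s : ℝ) : ℂ) = (ascPochhammer ℂ n).eval (s : ℂ) :=
    fun s => by rw [← ascPochhammer_map Complex.ofRealHom, ← Complex.ofRealHom_eq_coe,
      ← Complex.ofRealHom_eq_coe, Polynomial.eval_map_apply]
  simp [ordinaryHypergeometricCoefficient, hasc]

end Coefficient

section Gauss

variable {a b c : ℂ}

lemma isBigO_ordinaryHypergeometricCoefficient_succ (a b c : ℂ) :
    (fun n : ℕ => ordinaryHypergeometricCoefficient a b c (n + 1)) =O[atTop]
      fun n : ℕ => (n : ℝ) ^ ((a + b - c).re - 1) := by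
  have hpow : (fun n : ℕ => (n : ℂ) ^ (a + b - c - 1)) =O[atTop]
      fun n : ℕ => (n : ℝ) ^ ((a + b - c).re - 1) := by
    refine IsBigO.of_norm_eventuallyLE ?_
    filter_upwards [eventually_gt_atTop 0] with n hn
    rw [Complex.norm_natCast_cpow_of_pos hn, Complex.sub_re _ 1, Complex.one_re]
  have hratio := (tendsto_GammaSeq_mul_div a b c 1).isBigO_one ℝ
  refine (hpow.mul hratio).congr' ?_ (by simp only [mul_one, EventuallyEq.refl])
  filter_upwards [eventually_ne_atTop 0] with n hn
  rw [← ascPochhammer_eval_succ_mul_div hn, ascPochhammer_eval_one,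
    ordinaryHypergeometricCoefficient]
  field_simp

lemma summable_ordinaryHypergeometricCoefficient (h : 0 < (c - a - b).re) :
    Summable (ordinaryHypergeometricCoefficient a b c) := by
  rw [← summable_nat_add_iff 1]
  refine summable_of_isBigO_nat (Real.summable_nat_rpow.2 ?_)
    (isBigO_ordinaryHypergeometricCoefficient_succ a b c)
  simp only [Complex.sub_re, Complex.add_re] at h ⊢
  linarith

lemma tendsto_natCast_mul_ordinaryHypergeometricCoefficient (h : 0 < (c - a - b).re) :
    Tendsto (fun n : ℕ => (n : ℂ) * ordinaryHypergeometricCoefficient a b c n) atTop (𝓝 0) := by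
  rw [← tendsto_add_atTop_iff_nat 1]
  have hlin : (fun n : ℕ => ((n + 1 : ℕ) : ℂ)) =O[atTop] fun n : ℕ => (n : ℝ) := by
    refine IsBigO.of_bound 2 ?_
    filter_upwards [eventually_ge_atTop 1] with n hn
    rw [Complex.norm_natCast, Real.norm_natCast]
    exact_mod_cast (by lia : n + 1 ≤ 2 * n)
  have hre : 0 < -(a + b - c).re := by
    simp only [Complex.sub_re, Complex.add_re] at h ⊢
    linarith
  refine (hlin.mul (isBigO_ordinaryHypergeometricCoefficient_succ a b c)).trans_tendsto ?_
  refine ((tendsto_rpow_neg_atTop hre).comp tendsto_natCast_atTop_atTop).congr' ?_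
  filter_upwards [eventually_gt_atTop 0] with n hn
  have hn' : (n : ℝ) ≠ 0 := by positivity
  rw [Function.comp_apply, neg_neg, Real.rpow_sub_one hn', mul_div_cancel₀ _ hn']

lemma tsum_ordinaryHypergeometricCoefficient_contiguous (h : 0 < (c - a - b).re)
    (hc : ∀ m : ℕ, c ≠ -m) :
    c * (c - a - b) * ∑' n, ordinaryHypergeometricCoefficient a b c n =
      (c - a) * (c - b) * ∑' n, ordinaryHypergeometricCoefficient a b (c + 1) n := by
  have h' : 0 < (c + 1 - a - b).re := by
    simp only [Complex.sub_re, Complex.add_re, Complex.one_re] at h ⊢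
    linarith
  have hsub := ((summable_ordinaryHypergeometricCoefficient h).hasSum.mul_left
    (c * (c - a - b))).sub ((summable_ordinaryHypergeometricCoefficient h').hasSum.mul_left
    ((c - a) * (c - b)))
  have htelescope : ∀ N : ℕ, ∑ n ∈ Finset.range N,
      (c * (c - a - b) * ordinaryHypergeometricCoefficient a b c n -
        (c - a) * (c - b) * ordinaryHypergeometricCoefficient a b (c + 1) n) =
      -c * (N * ordinaryHypergeometricCoefficient a b c N) := fun N => by
    simp only [ordinaryHypergeometricCoefficient_contiguous hc, ← Finset.mul_sum]
    rw [Finset.sum_range_sub' fun n : ℕ => (n : ℂ) * ordinaryHypergeometricCoefficient a b c n]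
    simp
  have hzero := (tendsto_natCast_mul_ordinaryHypergeometricCoefficient h).const_mul (-c)
  rw [mul_zero] at hzero
  refine sub_eq_zero.1 (tendsto_nhds_unique hsub.tendsto_sum_nat ?_)
  simpa only [htelescope] using hzero

lemma tsum_ordinaryHypergeometricCoefficient_add_natCast (h : 0 < (c - a - b).re)
    (hc : ∀ m : ℕ, c ≠ -m) (N : ℕ) :
    (ascPochhammer ℂ N).eval c * (ascPochhammer ℂ N).eval (c - a - b) *
        ∑' n, ordinaryHypergeometricCoefficient a b c n =
      (ascPochhammer ℂ N).eval (c - a) * (ascPochhammer ℂ N).eval (c - b) *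
        ∑' n, ordinaryHypergeometricCoefficient a b (c + N) n := by
  induction N with
  | zero => simp
  | succ N ih =>
    have hN : 0 < (c + N - a - b).re := by
      simp only [Complex.sub_re, Complex.add_re, Complex.natCast_re] at h ⊢
      linarith [N.cast_nonneg (α := ℝ)]
    have hcN : ∀ m : ℕ, c + N ≠ -m := fun m hm => hc (m + N) (by
      push_cast
      linear_combination hm)
    have hstep := tsum_ordinaryHypergeometricCoefficient_contiguous hN hcN
    rw [Nat.cast_succ, ← add_assoc]
    simp only [ascPochhammer_succ_eval]
    linear_combination (c + N) * (c - a - b + N) * ih +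
      (ascPochhammer ℂ N).eval (c - a) * (ascPochhammer ℂ N).eval (c - b) * hstep

lemma norm_ordinaryHypergeometricCoefficient_le {r : ℝ} (hr : 0 < r) (hrc : r ≤ c.re) (n : ℕ) :
    ‖ordinaryHypergeometricCoefficient a b c n‖ ≤
      ordinaryHypergeometricCoefficient ‖a‖ ‖b‖ r n := by
  have ha := norm_ascPochhammer_eval_le a n
  have hb := norm_ascPochhammer_eval_le b n
  have hc := ascPochhammer_eval_le_norm hr.le hrc n
  have hr' := ascPochhammer_pos n r hr
  have ha' := (norm_nonneg _).trans ha
  have hb' := (norm_nonneg _).trans hb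
  simp only [ordinaryHypergeometricCoefficient, norm_mul, norm_inv, Complex.norm_natCast]
  gcongr

lemma summable_ordinaryHypergeometricCoefficient_real {a b c : ℝ} (h : a + b < c) :
    Summable (ordinaryHypergeometricCoefficient a b c) := by
  rw [← Complex.summable_ofReal]
  simp only [ofReal_ordinaryHypergeometricCoefficient]
  refine summable_ordinaryHypergeometricCoefficient ?_
  simp only [Complex.sub_re, Complex.ofReal_re]
  linarith

lemma tendsto_ordinaryHypergeometricCoefficient_comap_re (a b : ℂ) (n : ℕ) :
    Tendsto (fun c => ordinaryHypergeometricCoefficient a b c n) (comap Complex.re atTop)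
      (𝓝 (if n = 0 then 1 else 0)) := by
  cases n with
  | zero => simpa [ordinaryHypergeometricCoefficient] using tendsto_const_nhds
  | succ n =>
    rw [if_neg n.succ_ne_zero, ← mul_zero]
    exact (tendsto_inv_ascPochhammer_eval_comap_re n.succ_ne_zero).const_mul _

lemma tendsto_tsum_ordinaryHypergeometricCoefficient (a b : ℂ) :
    Tendsto (fun c => ∑' n, ordinaryHypergeometricCoefficient a b c n) (comap Complex.re atTop)
      (𝓝 1) := by
  have hr : 0 < ‖a‖ + ‖b‖ + 1 := by positivity
  have htsum : ∑' n : ℕ, (if n = 0 then 1 else 0 : ℂ) = 1 := tsum_ite_eq 0 _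
  rw [← htsum]
  refine tendsto_tsum_of_dominated_convergence
    (summable_ordinaryHypergeometricCoefficient_real (lt_add_one (‖a‖ + ‖b‖)))
    (tendsto_ordinaryHypergeometricCoefficient_comap_re a b) ?_
  filter_upwards [preimage_mem_comap (Ici_mem_atTop (‖a‖ + ‖b‖ + 1))] with c hc n
  exact norm_ordinaryHypergeometricCoefficient_le hr hc n

/-- Gauss's summation theorem for `₂F₁ a b c 1`. If `c - a` or `c - b` is a pole of `Γ`, Mathlib's
value `0` of `Γ` there makes the quotient `0`, which is the correct sum. -/
theorem hasSum_ordinaryHypergeometricCoefficient (h : 0 < (c - a - b).re)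
    (hc : ∀ m : ℕ, c ≠ -m) :
    HasSum (ordinaryHypergeometricCoefficient a b c)
      (Complex.Gamma c * Complex.Gamma (c - a - b) /
        (Complex.Gamma (c - a) * Complex.Gamma (c - b))) := by
  have hs : ∀ m : ℕ, c - a - b ≠ -m := fun m hm => by
    rw [hm, Complex.neg_re, Complex.natCast_re] at h
    linarith [m.cast_nonneg (α := ℝ)]
  have hcN : Tendsto (fun N : ℕ => c + N) atTop (comap Complex.re atTop) := by
    rw [tendsto_comap_iff]
    simpa [Function.comp_def] using
      tendsto_atTop_add_const_left atTop c.re tendsto_natCast_atTop_atTop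
  have hlim := (tendsto_ascPochhammer_eval_mul_div
    (show c - a + (c - b) = c + (c - a - b) by ring)).mul
      ((tendsto_tsum_ordinaryHypergeometricCoefficient a b).comp hcN)
  rw [mul_one] at hlim
  rw [(summable_ordinaryHypergeometricCoefficient h).hasSum_iff]
  refine tendsto_nhds_unique (tendsto_const_nhds.congr fun N => ?_) hlim
  have hne : (ascPochhammer ℂ N).eval c * (ascPochhammer ℂ N).eval (c - a - b) ≠ 0 :=
    mul_ne_zero (ascPochhammer_eval_ne_zero hc N) (ascPochhammer_eval_ne_zero hs N)
  rw [Function.comp_apply, div_mul_eq_mul_div, eq_div_iff hne, mul_comm,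
    tsum_ordinaryHypergeometricCoefficient_add_natCast h hc]

theorem hasSum_ordinaryHypergeometricCoefficient_real {a b c : ℝ} (h : a + b < c)
    (hc : ∀ m : ℕ, c ≠ -m) :
    HasSum (ordinaryHypergeometricCoefficient a b c)
      (Real.Gamma c * Real.Gamma (c - a - b) / (Real.Gamma (c - a) * Real.Gamma (c - b))) := by
  rw [← Complex.hasSum_ofReal]
  simp only [ofReal_ordinaryHypergeometricCoefficient]
  rw [Complex.ofReal_div, Complex.ofReal_mul, Complex.ofReal_mul]
  simp only [← Complex.Gamma_ofReal, Complex.ofReal_sub]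
  refine hasSum_ordinaryHypergeometricCoefficient ?_ fun m => by exact_mod_cast hc m
  simp only [Complex.sub_re, Complex.ofReal_re]
  linarith

end Gauss

section PlanarMaps

lemma Gamma_half_mul_Gamma_three_halves_div :
    Real.Gamma (1 / 2) * Real.Gamma (3 / 2) / (Real.Gamma (5 / 6) * Real.Gamma (7 / 6)) =
      3 / 2 := by
  have h32 : Real.Gamma (3 / 2) = 1 / 2 * Real.Gamma (1 / 2) := by
    rw [← Real.Gamma_add_one (by norm_num)]
    norm_num
  have h76 : Real.Gamma (7 / 6) = 1 / 6 * Real.Gamma (1 / 6) := by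
    rw [← Real.Gamma_add_one (by norm_num)]
    norm_num
  have hhalf : Real.Gamma (1 / 2) * Real.Gamma (1 / 2) = Real.pi := by
    rw [Real.Gamma_one_half_eq, Real.mul_self_sqrt Real.pi_pos.le]
  have hsixth : Real.Gamma (1 / 6) * Real.Gamma (5 / 6) = 2 * Real.pi := by
    have hreflect := Real.Gamma_mul_Gamma_one_sub (1 / 6)
    rw [mul_one_div, Real.sin_pi_div_six] at hreflect
    norm_num at hreflect ⊢
    linarith
  calc Real.Gamma (1 / 2) * Real.Gamma (3 / 2) / (Real.Gamma (5 / 6) * Real.Gamma (7 / 6))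
      = 3 * (Real.Gamma (1 / 2) * Real.Gamma (1 / 2)) /
          (Real.Gamma (1 / 6) * Real.Gamma (5 / 6)) := by
        rw [h32, h76]
        field_simp
        ring
    _ = 3 / 2 := by
        rw [hhalf, hsixth]
        field_simp

lemma C_nonneg (k : ℕ) : 0 ≤ C k := by
  unfold C
  positivity

lemma succ_mul_C_succ_mul_pow (k : ℕ) :
    ((k : ℝ) + 1) * (C (k + 1) * (4 / 27) ^ (k + 1)) =
      8 / 27 * ordinaryHypergeometricCoefficient (2 / 3 : ℝ) (1 / 3) (3 / 2) k := by
  have hasc : (ascPochhammer ℝ k).eval (3 / 2) ≠ 0 :=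
    (ascPochhammer_pos k _ (by norm_num)).ne'
  have hC : C (k + 1) = 2 * (3 * k)! / ((k + 1)! * (2 * k + 1)!) := by
    rw [C, if_neg k.succ_ne_zero]
    congr
  rw [hC, factorial_three_mul, factorial_two_mul_add_one, Nat.factorial_succ,
    ordinaryHypergeometricCoefficient, div_pow, pow_succ, pow_succ]
  push_cast
  field_simp
  ring

lemma C_succ_mul_pow (k : ℕ) :
    C (k + 1) * (4 / 27) ^ (k + 1) =
      2 / 3 * ordinaryHypergeometricCoefficient (-(1 / 3) : ℝ) (-(2 / 3)) (1 / 2) (k + 1) := by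
  have hk : (k : ℝ) + 1 ≠ 0 := k.cast_add_one_ne_zero
  have hshift := succ_mul_ordinaryHypergeometricCoefficient_succ_left
    (-(1 / 3) : ℝ) (-(2 / 3)) (1 / 2) k
  norm_num only at hshift
  refine mul_left_cancel₀ hk ?_
  rw [succ_mul_C_succ_mul_pow]
  linear_combination -2 / 3 * hshift

lemma hasSum_C_mul_pow : HasSum (fun k => C k * (4 / 27) ^ k) (4 / 3) := by
  have hgauss := hasSum_ordinaryHypergeometricCoefficient_real
    (a := -(1 / 3)) (b := -(2 / 3)) (c := 1 / 2) (by norm_num) fun m => by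
      linarith [m.cast_nonneg (α := ℝ)]
  norm_num only [Gamma_half_mul_Gamma_three_halves_div] at hgauss
  rw [← hasSum_nat_add_iff' 1]
  simp only [C_succ_mul_pow]
  convert! ((hasSum_nat_add_iff' 1).2 hgauss).mul_left (2 / 3) using 1
  norm_num [C, ordinaryHypergeometricCoefficient]

lemma hasSum_natCast_mul_C_mul_pow :
    HasSum (fun k : ℕ => k * (C k * (4 / 27) ^ k)) (4 / 9) := by
  have hgauss := hasSum_ordinaryHypergeometricCoefficient_real
    (a := 2 / 3) (b := 1 / 3) (c := 3 / 2) (by norm_num) fun m => by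
      linarith [m.cast_nonneg (α := ℝ)]
  rw [mul_comm (Real.Gamma _)] at hgauss
  norm_num only [Gamma_half_mul_Gamma_three_halves_div] at hgauss
  rw [← hasSum_nat_add_iff' 1]
  push_cast [succ_mul_C_succ_mul_pow]
  convert! hgauss.mul_left (8 / 27) using 1
  norm_num

lemma hasSum_iff_hasSum_two_mul {M : Type*} [AddCommMonoid M] [TopologicalSpace M] {f : ℕ → M}
    {x : M} (hf : ∀ m, ¬Even m → f m = 0) : HasSum f x ↔ HasSum (fun k => f (2 * k)) x := by
  have hinj : Function.Injective fun k : ℕ => 2 * k := mul_right_injective₀ two_ne_zero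
  refine (hinj.hasSum_iff fun m hm => hf m fun heven => hm ?_).symm
  obtain ⟨k, rfl⟩ := heven.two_dvd
  exact Set.mem_range_self k

lemma mu_nonneg (m : ℕ) : 0 ≤ mu m := by
  have hC := C_nonneg (m / 2)
  unfold mu
  positivity

lemma mu_of_not_even {m : ℕ} (hm : ¬Even m) : mu m = 0 :=
  if_neg hm

lemma mu_two_mul (k : ℕ) : mu (2 * k) = C k * (4 / 27) ^ k / (4 / 3) := by
  simp [mu]

end PlanarMaps

/-- `μ` is a probability distribution on `ℕ` (supported on the
even numbers by definition), and its mean `Σ_m m · μ(m) = Σ_k 2k · μ({2k})`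
equals `2/3`. -/
theorem mu_isProbability_and_mean :
    (∀ m : ℕ, 0 ≤ mu m) ∧ HasSum mu 1 ∧
      HasSum (fun m : ℕ => (m : ℝ) * mu m) (2 / 3) := by
  refine ⟨mu_nonneg, ?_, ?_⟩
  · rw [hasSum_iff_hasSum_two_mul fun _ => mu_of_not_even]
    simpa [mu_two_mul] using hasSum_C_mul_pow.div_const (4 / 3)
  · rw [hasSum_iff_hasSum_two_mul fun m hm => by rw [mu_of_not_even hm, mul_zero]]
    convert! hasSum_natCast_mul_C_mul_pow.mul_left (3 / 2) using 1
    · ext k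
      rw [mu_two_mul]
      push_cast
      ring
    · norm_num
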